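/- arXiv:2507.01969 — 4 statements merged into one kernel-verified Lean document; each statement's English description precedes it below -/
import Mathlib

section
/- Let Γ_A = (A, α), Γ_B = (B, β) and Γ_C = (C, γ) be cooperative games on pairwise disjoint finite player sets, and let i, k ∈ A be two distinct players. Then the parallel axiom holds for the partial composition of games: (Γ_A ∘_i Γ_B) ∘_k Γ_C = (Γ_A ∘_k Γ_C) ∘_i Γ_B; that is, both composite games have the same player set ((A ∖ {i, k}) ∪ B ∪ C) and their coalition functions agree on every subset of it. -/
open Finset

/-- The discrete derivative of a coalition function `v` at player `i`. -/
noncomputable def gameDeriv {ι : Type*} [DecidableEq ι]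
    (v : Finset ι → ℝ) (i : ι) (S : Finset ι) : ℝ :=
  v (insert i S) - v (S.erase i)

/-- The coalition function of the partial composition `Γ_A ∘ᵢ Γ_B`. -/
noncomputable def gameComp {ι : Type*} [DecidableEq ι]
    (A B : Finset ι) (i : ι) (α β : Finset ι → ℝ) (S : Finset ι) : ℝ :=
  β B * α (S ∩ A) + gameDeriv α i (S ∩ A) * β (S ∩ B)

/-!
Differentiation at a player `k` of the outer game commutes with composition at `i`:
`∂ₖ(α ∘ᵢ β) = (∂ₖ α) ∘ᵢ β`. Hence, on a coalition `S` avoiding `i` and `k`,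
`((α ∘ᵢ β) ∘ₖ γ)(S)` is the sum of `β(B) γ(C) α(S_A)`, `β(S_B) γ(C) ∂ᵢα(S_A)`,
`β(B) γ(S_C) ∂ₖα(S_A)` and `β(S_B) γ(S_C) ∂ᵢ∂ₖα(S_A)`, which is symmetric under exchanging
`(i, B, β)` with `(k, C, γ)` because mixed derivatives commute.
-/

section

variable {ι : Type*} [DecidableEq ι] {A B C S : Finset ι} {i k : ι}

theorem erase_erase_union (hkB : k ∉ B) : (A.erase i ∪ B).erase k = (A \ {i, k}) ∪ B := by
  rw [erase_union_distrib, erase_eq_of_notMem hkB, sdiff_insert, sdiff_singleton_eq_erase,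
    erase_right_comm]

theorem gameDeriv_comm (v : Finset ι → ℝ) (i k : ι) (S : Finset ι) :
    gameDeriv (gameDeriv v i) k S = gameDeriv (gameDeriv v k) i S := by
  obtain rfl | hik := eq_or_ne i k
  · rfl
  · simp only [gameDeriv, erase_insert_of_ne hik, erase_insert_of_ne hik.symm,
      insert_comm i k, erase_right_comm (a := i) (b := k)]
    ring

theorem gameDeriv_gameComp (α β : Finset ι → ℝ) (hkA : k ∈ A) (hkB : k ∉ B) (S : Finset ι) :
    gameDeriv (gameComp A B i α β) k S = gameComp A B i (gameDeriv α k) β S := by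
  have erase_inter_B : (S ∩ B).erase k = S ∩ B :=
    erase_eq_of_notMem fun h => hkB (mem_of_mem_inter_right h)
  calc gameDeriv (gameComp A B i α β) k S
      = β B * gameDeriv α k (S ∩ A) + gameDeriv (gameDeriv α i) k (S ∩ A) * β (S ∩ B) := by
        simp only [gameDeriv, gameComp, insert_inter_of_mem hkA, insert_inter_of_notMem hkB,
          erase_inter, erase_inter_B]
        ring
    _ = gameComp A B i (gameDeriv α k) β S := by
        rw [gameDeriv_comm, gameComp]

theorem gameComp_inter_erase_union (α β : Finset ι → ℝ) (hiS : i ∉ S) :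
    gameComp A B i α β (S ∩ (A.erase i ∪ B)) = gameComp A B i α β S := by
  have inter_A : S ∩ (A.erase i ∪ B) ∩ A = S ∩ A := by grind
  have inter_B : S ∩ (A.erase i ∪ B) ∩ B = S ∩ B := by grind
  rw [gameComp, inter_A, inter_B, gameComp]

theorem gameComp_gameComp_apply (α β γ : Finset ι → ℝ) (hkA : k ∈ A) (hkB : k ∉ B)
    (hiS : i ∉ S) :
    gameComp (A.erase i ∪ B) C k (gameComp A B i α β) γ S =
      γ C * gameComp A B i α β S + gameComp A B i (gameDeriv α k) β S * γ (S ∩ C) := by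
  rw [gameComp, gameDeriv_gameComp α β hkA hkB, gameComp_inter_erase_union α β hiS,
    gameComp_inter_erase_union (gameDeriv α k) β hiS]

theorem gameComp_gameComp_comm (α β γ : Finset ι → ℝ) (hiA : i ∈ A) (hkA : k ∈ A)
    (hkB : k ∉ B) (hiC : i ∉ C) (hiS : i ∉ S) (hkS : k ∉ S) :
    gameComp (A.erase i ∪ B) C k (gameComp A B i α β) γ S =
      gameComp (A.erase k ∪ C) B i (gameComp A C k α γ) β S := by
  rw [gameComp_gameComp_apply α β γ hkA hkB hiS, gameComp_gameComp_apply α γ β hiA hiC hkS]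
  simp only [gameComp]
  rw [gameDeriv_comm α i k]
  ring

theorem parallel_axiom_general (α β γ : Finset ι → ℝ) (hiA : i ∈ A) (hkA : k ∈ A)
    (hiB : i ∉ B) (hkB : k ∉ B) (hiC : i ∉ C) (hkC : k ∉ C) :
    ((A.erase i ∪ B).erase k ∪ C = (A \ {i, k}) ∪ B ∪ C) ∧
    ((A.erase k ∪ C).erase i ∪ B = (A \ {i, k}) ∪ B ∪ C) ∧
    (∀ S ⊆ (A \ {i, k}) ∪ B ∪ C,
      gameComp (A.erase i ∪ B) C k (gameComp A B i α β) γ S =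
        gameComp (A.erase k ∪ C) B i (gameComp A C k α γ) β S) := by
  refine ⟨by rw [erase_erase_union hkB], ?_, fun S hS => ?_⟩
  · rw [erase_erase_union hiC, pair_comm, union_right_comm]
  · have hiS : i ∉ S := fun h => by simpa [hiB, hiC] using hS h
    have hkS : k ∉ S := fun h => by simpa [hkB, hkC] using hS h
    exact gameComp_gameComp_comm α β γ hiA hkA hkB hiC hiS hkS

end

/-- The parallel axiom for the partial composition of cooperative games:
`(Γ_A ∘ᵢ Γ_B) ∘ₖ Γ_C = (Γ_A ∘ₖ Γ_C) ∘ᵢ Γ_B` for distinct `i, k ∈ A`; both composite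
games have the player set `(A ∖ {i,k}) ∪ B ∪ C`. -/
theorem parallel_axiom {ι : Type*} [DecidableEq ι]
    (A B C : Finset ι) (α β γ : Finset ι → ℝ)
    (hAB : Disjoint A B) (hAC : Disjoint A C) (hBC : Disjoint B C)
    (hα0 : α ∅ = 0) (hβ0 : β ∅ = 0) (hγ0 : γ ∅ = 0)
    (i k : ι) (hi : i ∈ A) (hk : k ∈ A) (hik : i ≠ k) :
    ((A.erase i ∪ B).erase k ∪ C = (A \ {i, k}) ∪ B ∪ C) ∧
    ((A.erase k ∪ C).erase i ∪ B = (A \ {i, k}) ∪ B ∪ C) ∧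
    (∀ S ⊆ (A \ {i, k}) ∪ B ∪ C,
      gameComp (A.erase i ∪ B) C k (gameComp A B i α β) γ S =
        gameComp (A.erase k ∪ C) B i (gameComp A C k α γ) β S) := by
  exact parallel_axiom_general α β γ hi hk (disjoint_left.mp hAB hi) (disjoint_left.mp hAB hk)
    (disjoint_left.mp hAC hi) (disjoint_left.mp hAC hk)
end

section
/- Convex non-negative games are stable under partial composition: if Γ_A = (A, α) and Γ_B = (B, β) are games on disjoint finite player sets whose coalition functions are non-negative and convex (supermodular), and i ∈ A, then the coalition function of the composite game Γ_A ∘_i Γ_B is also non-negative and convex. -/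
open Finset

/-!
Write `c = β(B)`. On coalitions not containing `i` the composite is `c · a + d · b`, where `a`, `d`
and `b` are the pullbacks of `α`, `∂ᵢα` and `β`. The derivative `d` is monotone and non-negative but
need not be supermodular; what is supermodular is `a + d`, the pullback of `α(· ∪ {i})`. Hence for a
*constant* `0 ≤ t ≤ c` the function `c · a + t · d = (c - t) · a + t · (a + d)` is supermodular.
To compare the values at `x`, `y`, `x ⊓ y`, `x ⊔ y`, freeze `t = b (x ⊓ y)`: the remainder
`d · (b - t)` vanishes at `x ⊓ y`, and its inequality follows from the monotonicity of `d` together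
with the supermodularity and monotonicity of `b`.
-/

/-- `f` is supermodular at all pairs of points of `s`. A game on the player set `A` is convex when
its coalition function is supermodular on `Set.Iic A`. The meet and join are not required to lie in
`s`; where this matters, `s` is assumed to be a sublattice. -/
def SupermodularOn {L R : Type*} [Lattice L] [Add R] [LE R] (f : L → R) (s : Set L) : Prop :=
  ∀ ⦃x⦄, x ∈ s → ∀ ⦃y⦄, y ∈ s → f x + f y ≤ f (x ⊓ y) + f (x ⊔ y)

namespace SupermodularOn

section Lattice

variable {L M R : Type*} [Lattice L] [Lattice M] [Add R] [LE R] {f g : L → R} {s t : Set L}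

theorem mono (hf : SupermodularOn f t) (hst : s ⊆ t) : SupermodularOn f s :=
  fun _ hx _ hy ↦ hf (hst hx) (hst hy)

theorem congr (hf : SupermodularOn f s) (hs : IsSublattice s) (hfg : s.EqOn f g) :
    SupermodularOn g s := fun x hx y hy ↦ by
  rw [← hfg hx, ← hfg hy, ← hfg (hs.infClosed hx hy), ← hfg (hs.supClosed hx hy)]
  exact hf hx hy

theorem comp {φ : M → L} {u : Set M} (hf : SupermodularOn f s) (hφ : u.MapsTo φ s)
    (map_inf : ∀ x y, φ (x ⊓ y) = φ x ⊓ φ y) (map_sup : ∀ x y, φ (x ⊔ y) = φ x ⊔ φ y) :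
    SupermodularOn (fun x ↦ f (φ x)) u := fun x hx y hy ↦ by
  simpa only [map_inf, map_sup] using hf (hφ hx) (hφ hy)

end Lattice

theorem monotoneOn_Iic {L R : Type*} [GeneralizedBooleanAlgebra L] [AddCommMonoid R]
    [PartialOrder R] [IsOrderedCancelAddMonoid R] {f : L → R} {a : L}
    (hf : SupermodularOn f (Set.Iic a)) (bot_le : ∀ x ≤ a, f ⊥ ≤ f x) :
    MonotoneOn f (Set.Iic a) := by
  intro x hx y hy hxy
  have sdiff_mem : y \ x ≤ a := sdiff_le.trans hy
  refine le_of_add_le_add_left (a := f ⊥) ?_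
  calc f ⊥ + f x ≤ f (y \ x) + f x := by gcongr; exact bot_le _ sdiff_mem
    _ ≤ f (y \ x ⊓ x) + f (y \ x ⊔ x) := hf sdiff_mem hx
    _ = f ⊥ + f y := by rw [inf_comm, inf_sdiff_self_right, sdiff_sup_cancel hxy]

theorem const_mul_add_mul {L R : Type*} [Lattice L] [CommRing R] [PartialOrder R]
    [IsOrderedRing R] {a b d : L → R} {c : R} {s : Set L} (hs : IsSublattice s)
    (ha : SupermodularOn a s) (had : SupermodularOn (a + d) s)
    (d_mono : MonotoneOn d s) (d_nonneg : ∀ x ∈ s, 0 ≤ d x)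
    (hb : SupermodularOn b s) (b_mono : MonotoneOn b s) (b_nonneg : ∀ x ∈ s, 0 ≤ b x)
    (b_le : ∀ x ∈ s, b x ≤ c) : SupermodularOn (fun x ↦ c * a x + d x * b x) s := by
  intro x hx y hy
  have inf_mem : x ⊓ y ∈ s := hs.infClosed hx hy
  have sup_mem : x ⊔ y ∈ s := hs.supClosed hx hy
  set t := b (x ⊓ y)
  have constant_weight : (c * a x + t * d x) + (c * a y + t * d y) ≤
      (c * a (x ⊓ y) + t * d (x ⊓ y)) + (c * a (x ⊔ y) + t * d (x ⊔ y)) := by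
    have ha_weighted := mul_le_mul_of_nonneg_left (ha hx hy) (sub_nonneg.2 (b_le _ inf_mem))
    have had_weighted := mul_le_mul_of_nonneg_left (had hx hy) (b_nonneg _ inf_mem)
    simp only [Pi.add_apply] at had_weighted
    linear_combination ha_weighted + had_weighted
  have remainder : d x * (b x - t) + d y * (b y - t) ≤ d (x ⊔ y) * (b (x ⊔ y) - t) :=
    calc d x * (b x - t) + d y * (b y - t)
        ≤ d (x ⊔ y) * (b x - t) + d (x ⊔ y) * (b y - t) :=
          add_le_add
            (mul_le_mul_of_nonneg_right (d_mono hx sup_mem le_sup_left)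
              (sub_nonneg.2 (b_mono inf_mem hx inf_le_left)))
            (mul_le_mul_of_nonneg_right (d_mono hy sup_mem le_sup_right)
              (sub_nonneg.2 (b_mono inf_mem hy inf_le_right)))
      _ = d (x ⊔ y) * (b x + b y - t - t) := by ring
      _ ≤ d (x ⊔ y) * (b (x ⊔ y) - t) := by
          refine mul_le_mul_of_nonneg_left ?_ (d_nonneg _ sup_mem)
          linear_combination hb hx hy
  linear_combination constant_weight + remainder

end SupermodularOn

section Games

variable {ι : Type*} [DecidableEq ι] {A B : Finset ι} {α β : Finset ι → ℝ} {i : ι}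

theorem isSublattice_setOf_notMem (i : ι) : IsSublattice {S : Finset ι | i ∉ S} where
  supClosed _ hS _ hT := notMem_union.2 ⟨hS, hT⟩
  infClosed _ hS _ _ h := hS (mem_of_mem_inter_left h)

theorem gameDeriv_nonneg (hα : MonotoneOn α (Set.Iic A)) (hi : i ∈ A) {S : Finset ι} (hS : S ⊆ A) :
    0 ≤ gameDeriv α i S :=
  sub_nonneg.2 <| hα ((erase_subset i S).trans hS) (insert_subset hi hS)
    ((erase_subset i S).trans (subset_insert i S))

theorem SupermodularOn.monotoneOn_gameDeriv (hα : SupermodularOn α (Set.Iic A)) (hi : i ∈ A) :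
    MonotoneOn (gameDeriv α i) (Set.Iic A) := by
  intro S hS T hT hST
  have inter_eq : insert i S ⊓ T.erase i = S.erase i := by
    ext j; have := @hST j; simp only [inf_eq_inter, mem_inter, mem_insert, mem_erase]; tauto
  have union_eq : insert i S ⊔ T.erase i = insert i T := by
    ext j; have := @hST j; simp only [sup_eq_union, mem_union, mem_insert, mem_erase]; tauto
  have key := hα (insert_subset hi hS : insert i S ⊆ A) ((erase_subset i T).trans hT)
  rw [inter_eq, union_eq] at key
  unfold gameDeriv
  linarith

theorem add_gameDeriv_of_notMem {S : Finset ι} (hS : i ∉ S) :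
    α S + gameDeriv α i S = α (insert i S) := by
  rw [gameDeriv, erase_eq_of_notMem hS, add_sub_cancel]

theorem SupermodularOn.comp_inter {s : Set (Finset ι)} (hα : SupermodularOn α (Set.Iic A)) :
    SupermodularOn (fun S ↦ α (S ∩ A)) s :=
  hα.comp (fun _ _ ↦ inter_subset_right) (inter_inter_distrib_right · · A)
    (union_inter_distrib_right · · A)

theorem SupermodularOn.comp_insert (hα : SupermodularOn α (Set.Iic A)) (hi : i ∈ A) :
    SupermodularOn (fun S ↦ α (insert i S)) (Set.Iic A) :=
  hα.comp (fun _ hS ↦ insert_subset hi hS) (insert_inter_distrib · · i)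
    (insert_union_distrib i)

theorem gameComp_nonneg (hα : MonotoneOn α (Set.Iic A)) (α_nonneg : ∀ S ⊆ A, 0 ≤ α S)
    (β_nonneg : ∀ S ⊆ B, 0 ≤ β S) (hi : i ∈ A) (S : Finset ι) : 0 ≤ gameComp A B i α β S :=
  add_nonneg (mul_nonneg (β_nonneg B subset_rfl) (α_nonneg _ inter_subset_right))
    (mul_nonneg (gameDeriv_nonneg hα hi inter_subset_right) (β_nonneg _ inter_subset_right))

theorem supermodularOn_gameComp
    (hα : SupermodularOn α (Set.Iic A)) (α_mono : MonotoneOn α (Set.Iic A))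
    (hβ : SupermodularOn β (Set.Iic B)) (β_mono : MonotoneOn β (Set.Iic B))
    (β_nonneg : ∀ S ⊆ B, 0 ≤ β S) (hi : i ∈ A) :
    SupermodularOn (gameComp A B i α β) {S | i ∉ S} := by
  have hs := isSublattice_setOf_notMem i
  have insert_supermodular : SupermodularOn
      ((fun S ↦ α (S ∩ A)) + fun S ↦ gameDeriv α i (S ∩ A)) {S | i ∉ S} :=
    (hα.comp_insert hi).comp_inter.congr hs fun S hS ↦
      (add_gameDeriv_of_notMem fun h ↦ hS (mem_of_mem_inter_left h)).symm
  exact .const_mul_add_mul hs hα.comp_inter insert_supermodular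
    (fun S _ T _ hST ↦ hα.monotoneOn_gameDeriv hi inter_subset_right inter_subset_right
      (inter_subset_inter_right hST))
    (fun S _ ↦ gameDeriv_nonneg α_mono hi inter_subset_right)
    hβ.comp_inter
    (fun S _ T _ hST ↦ β_mono inter_subset_right inter_subset_right
      (inter_subset_inter_right hST))
    (fun S _ ↦ β_nonneg _ inter_subset_right)
    (fun S _ ↦ β_mono inter_subset_right Set.self_mem_Iic inter_subset_right)

theorem convex_gameComp_general (hα0 : α ∅ = 0) (hβ0 : β ∅ = 0)
    (hαnn : ∀ S ⊆ A, 0 ≤ α S) (hβnn : ∀ S ⊆ B, 0 ≤ β S)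
    (hα : SupermodularOn α (Set.Iic A)) (hβ : SupermodularOn β (Set.Iic B))
    (hiA : i ∈ A) (hiB : i ∉ B) :
    (∀ S ⊆ A.erase i ∪ B, 0 ≤ gameComp A B i α β S) ∧
      SupermodularOn (gameComp A B i α β) (Set.Iic (A.erase i ∪ B)) := by
  have α_mono : MonotoneOn α (Set.Iic A) := hα.monotoneOn_Iic fun S hS ↦ hα0.trans_le (hαnn S hS)
  have β_mono : MonotoneOn β (Set.Iic B) := hβ.monotoneOn_Iic fun S hS ↦ hβ0.trans_le (hβnn S hS)
  have notMem_of_le : Set.Iic (A.erase i ∪ B) ⊆ {S | i ∉ S} := fun S hS hiS ↦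
    notMem_union.2 ⟨notMem_erase i A, hiB⟩ (hS hiS)
  exact ⟨fun S _ ↦ gameComp_nonneg α_mono hαnn hβnn hiA S,
    (supermodularOn_gameComp hα α_mono hβ β_mono hβnn hiA).mono notMem_of_le⟩

end Games

/-- Convex (supermodular) non-negative games are stable under partial composition:
if `α` and `β` are non-negative and convex on coalitions of their player sets, then
so is the coalition function of the composite game `Γ_A ∘ᵢ Γ_B`. -/
theorem convex_gameComp {ι : Type*} [DecidableEq ι]
    (A B : Finset ι) (α β : Finset ι → ℝ)
    (hAB : Disjoint A B) (hα0 : α ∅ = 0) (hβ0 : β ∅ = 0)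
    (hαnn : ∀ S ⊆ A, 0 ≤ α S) (hβnn : ∀ S ⊆ B, 0 ≤ β S)
    (hαc : ∀ S T : Finset ι, S ⊆ A → T ⊆ A → α S + α T ≤ α (S ∩ T) + α (S ∪ T))
    (hβc : ∀ S T : Finset ι, S ⊆ B → T ⊆ B → β S + β T ≤ β (S ∩ T) + β (S ∪ T))
    (i : ι) (hi : i ∈ A) :
    (∀ S ⊆ A.erase i ∪ B, 0 ≤ gameComp A B i α β S) ∧
    (∀ S T : Finset ι, S ⊆ A.erase i ∪ B → T ⊆ A.erase i ∪ B →
      gameComp A B i α β S + gameComp A B i α β T ≤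
        gameComp A B i α β (S ∩ T) + gameComp A B i α β (S ∪ T)) :=
  have ⟨nonneg, supermodular⟩ := convex_gameComp_general hα0 hβ0 hαnn hβnn
    (fun S hS T hT ↦ hαc S T hS hT) (fun S hS T hT ↦ hβc S T hS hT) hi (disjoint_left.1 hAB hi)
  ⟨nonneg, fun _ _ hS hT ↦ supermodular hS hT⟩
end

section
/- Let Γ_A = (A, α) and Γ_B = (B, β) be non-negative cooperative games on disjoint finite player sets and let i ∈ A. Then: (1) for every imputation x ∈ I(Γ_A) and every imputation y ∈ I(Γ_B), the partial tensor product x ⊗_i y is an imputation of the composite game Γ_A ∘_i Γ_B; and (2) if moreover α({i}) > 0 and β(B) > 0, then the map (x, y) ↦ x ⊗_i y from I(Γ_A) × I(Γ_B) to I(Γ_A ∘_i Γ_B) is injective. -/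
open Finset

/-- `x` is an imputation of the game `(N, v)`: it is a preimputation
(`x(N) = v(N)`) and `x_j ≥ v({j})` for every player `j ∈ N`. -/
def IsImputation {ι : Type*} (N : Finset ι) (v : Finset ι → ℝ) (x : ι → ℝ) : Prop :=
  (∑ j ∈ N, x j) = v N ∧ ∀ j ∈ N, v {j} ≤ x j

/-- The partial tensor product of `x ∈ ℝ^A` and `y ∈ ℝ^B` at `i ∈ A`. -/
noncomputable def ptensor {ι : Type*} [DecidableEq ι]
    (B : Finset ι) (i : ι) (x y : ι → ℝ) (j : ι) : ℝ :=
  if j ∈ B then x i * y j else (∑ l ∈ B, y l) * x j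

/-!
Total payoff and worth of the grand coalition are both multiplicative, so `x ⊗ᵢ y` is efficient;
on coalitions inside `A ∖ {i}` and inside `B` the composite game reduces to `β(B) · α` and
`α({i}) · β`, so individual rationality is a product of the inequalities for `x` and `y`.
For injectivity, the coordinates in `A ∖ {i}` determine `x` there because `β(B) ≠ 0`, efficiency
then determines `x i`, and dividing by `x i ≥ α({i}) > 0` recovers `y`.
-/

section PartialTensor

variable {ι : Type*} [DecidableEq ι] {A B : Finset ι} {i j : ι} {x y x' y' : ι → ℝ}

theorem ptensor_of_mem (hj : j ∈ B) : ptensor B i x y j = x i * y j :=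
  if_pos hj

theorem ptensor_of_notMem (hj : j ∉ B) : ptensor B i x y j = (∑ l ∈ B, y l) * x j :=
  if_neg hj

theorem sum_ptensor (hAB : Disjoint (A.erase i) B) (hi : i ∈ A) :
    ∑ j ∈ A.erase i ∪ B, ptensor B i x y j = (∑ j ∈ A, x j) * ∑ j ∈ B, y j := by
  have sum_left : ∑ j ∈ A.erase i, ptensor B i x y j = (∑ l ∈ B, y l) * ∑ j ∈ A.erase i, x j := by
    rw [mul_sum]
    exact sum_congr rfl fun j hj => ptensor_of_notMem (disjoint_left.mp hAB hj)
  have sum_right : ∑ j ∈ B, ptensor B i x y j = x i * ∑ j ∈ B, y j := by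
    rw [mul_sum]
    exact sum_congr rfl fun j hj => ptensor_of_mem hj
  rw [sum_union hAB, sum_left, sum_right, ← add_sum_erase A x hi]
  ring

theorem eq_of_eq_on_erase_of_sum_eq {M : Type*} [AddCommMonoid M] [IsRightCancelAdd M]
    {f g : ι → M} (hi : i ∈ A) (hfg : ∀ j ∈ A.erase i, f j = g j)
    (hsum : ∑ j ∈ A, f j = ∑ j ∈ A, g j) : f i = g i := by
  rw [← add_sum_erase A f hi, ← add_sum_erase A g hi, sum_congr rfl hfg] at hsum
  exact add_right_cancel hsum

theorem eq_and_eq_of_ptensor_eq (hAB : Disjoint (A.erase i) B) (hi : i ∈ A)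
    (hx : ∑ j ∈ A, x j = ∑ j ∈ A, x' j) (hy : ∑ j ∈ B, y j = ∑ j ∈ B, y' j)
    (hxi : x i ≠ 0) (hyB : ∑ j ∈ B, y j ≠ 0)
    (h : ∀ j ∈ A.erase i ∪ B, ptensor B i x y j = ptensor B i x' y' j) :
    (∀ j ∈ A, x j = x' j) ∧ ∀ j ∈ B, y j = y' j := by
  have eq_on_erase : ∀ j ∈ A.erase i, x j = x' j := fun j hj => by
    have hj_eq := h j (mem_union_left B hj)
    have hjB : j ∉ B := disjoint_left.mp hAB hj
    rw [ptensor_of_notMem hjB, ptensor_of_notMem hjB, ← hy] at hj_eq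
    exact mul_left_cancel₀ hyB hj_eq
  have eq_at : x i = x' i := eq_of_eq_on_erase_of_sum_eq hi eq_on_erase hx
  refine ⟨fun j hj => ?_, fun j hj => ?_⟩
  · obtain rfl | hji := eq_or_ne j i
    · exact eq_at
    · exact eq_on_erase j (mem_erase.mpr ⟨hji, hj⟩)
  · have hj_eq := h j (mem_union_right _ hj)
    rw [ptensor_of_mem hj, ptensor_of_mem hj, ← eq_at] at hj_eq
    exact mul_left_cancel₀ hxi hj_eq

end PartialTensor

section Composition

variable {ι : Type*} [DecidableEq ι] {A B S : Finset ι} {α β : Finset ι → ℝ} {i : ι}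

theorem gameComp_erase_union (hAB : Disjoint A B) (hi : i ∈ A) :
    gameComp A B i α β (A.erase i ∪ B) = α A * β B := by
  have inter_left : (A.erase i ∪ B) ∩ A = A.erase i := by
    rw [union_inter_distrib_right, disjoint_iff_inter_eq_empty.mp hAB.symm, union_empty,
      inter_eq_left.mpr (erase_subset i A)]
  rw [gameComp, gameDeriv, inter_left, union_inter_cancel_right, insert_erase hi, erase_idem]
  ring

theorem gameComp_of_subset_left (hAB : Disjoint A B) (hβ : β ∅ = 0) (hS : S ⊆ A) :
    gameComp A B i α β S = β B * α S := by
  rw [gameComp, inter_eq_left.mpr hS, disjoint_iff_inter_eq_empty.mp (hAB.mono_left hS), hβ,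
    mul_zero, add_zero]

theorem gameComp_of_subset_right (hAB : Disjoint A B) (hα : α ∅ = 0) (hS : S ⊆ B) :
    gameComp A B i α β S = α {i} * β S := by
  rw [gameComp, gameDeriv, inter_eq_left.mpr hS,
    disjoint_iff_inter_eq_empty.mp (hAB.symm.mono_left hS), erase_empty, hα, mul_zero, zero_add,
    sub_zero, insert_empty_eq]

end Composition

section Imputation

variable {ι : Type*} [DecidableEq ι] {A B : Finset ι} {α β : Finset ι → ℝ} {i : ι} {x y : ι → ℝ}

theorem isImputation_ptensor (hAB : Disjoint A B) (hα : α ∅ = 0) (hβ : β ∅ = 0) (hi : i ∈ A)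
    (hαi : 0 ≤ α {i}) (hβB : 0 ≤ β B) (hβ_single : ∀ j ∈ B, 0 ≤ β {j})
    (hx : IsImputation A α x) (hy : IsImputation B β y) :
    IsImputation (A.erase i ∪ B) (gameComp A B i α β) (ptensor B i x y) := by
  obtain ⟨hx_sum, hx_ge⟩ := hx
  obtain ⟨hy_sum, hy_ge⟩ := hy
  refine ⟨?_, fun j hj => ?_⟩
  · rw [sum_ptensor (hAB.mono_left (erase_subset i A)) hi, gameComp_erase_union hAB hi,
      hx_sum, hy_sum]
  · rcases mem_union.mp hj with hjA | hjB
    · replace hjA : j ∈ A := mem_of_mem_erase hjA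
      rw [gameComp_of_subset_left hAB hβ (singleton_subset_iff.mpr hjA),
        ptensor_of_notMem (disjoint_left.mp hAB hjA), hy_sum]
      exact mul_le_mul_of_nonneg_left (hx_ge j hjA) hβB
    · rw [gameComp_of_subset_right hAB hα (singleton_subset_iff.mpr hjB), ptensor_of_mem hjB]
      exact mul_le_mul (hx_ge i hi) (hy_ge j hjB) (hβ_single j hjB) (hαi.trans (hx_ge i hi))

end Imputation

theorem imputation_ptensor_general {ι : Type*} [DecidableEq ι]
    (A B : Finset ι) (α β : Finset ι → ℝ)
    (hAB : Disjoint A B) (hα0 : α ∅ = 0) (hβ0 : β ∅ = 0) (i : ι) (hi : i ∈ A) :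
    (0 ≤ α {i} → 0 ≤ β B → (∀ j ∈ B, 0 ≤ β {j}) →
      ∀ x y : ι → ℝ, IsImputation A α x → IsImputation B β y →
        IsImputation (A.erase i ∪ B) (gameComp A B i α β) (ptensor B i x y)) ∧
    (0 < α {i} → β B ≠ 0 →
      ∀ x y x' y' : ι → ℝ,
        IsImputation A α x → IsImputation B β y →
        IsImputation A α x' → IsImputation B β y' →
        (∀ j ∈ A.erase i ∪ B, ptensor B i x y j = ptensor B i x' y' j) →
        (∀ j ∈ A, x j = x' j) ∧ (∀ j ∈ B, y j = y' j)) := by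
  refine ⟨fun hαi hβB hβ_single x y => isImputation_ptensor hAB hα0 hβ0 hi hαi hβB hβ_single, ?_⟩
  rintro hαi hβB x y x' y' ⟨hx_sum, hx_ge⟩ ⟨hy_sum, -⟩ ⟨hx'_sum, -⟩ ⟨hy'_sum, -⟩
  have hxi : x i ≠ 0 := (hαi.trans_le (hx_ge i hi)).ne'
  have hyB : ∑ j ∈ B, y j ≠ 0 := hy_sum ▸ hβB
  exact eq_and_eq_of_ptensor_eq (hAB.mono_left (erase_subset i A)) hi
    (hx_sum.trans hx'_sum.symm) (hy_sum.trans hy'_sum.symm) hxi hyB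

/-- (1) The partial tensor product of imputations of the components is an imputation
of the composite game; (2) if `α({i}) > 0` and `β(B) > 0`, the induced map
`I(Γ_A) × I(Γ_B) → I(Γ_A ∘ᵢ Γ_B)` is injective. -/
theorem imputation_ptensor {ι : Type*} [DecidableEq ι]
    (A B : Finset ι) (α β : Finset ι → ℝ)
    (hAB : Disjoint A B) (hα0 : α ∅ = 0) (hβ0 : β ∅ = 0)
    (hαnn : ∀ S ⊆ A, 0 ≤ α S) (hβnn : ∀ S ⊆ B, 0 ≤ β S)
    (i : ι) (hi : i ∈ A) :
    (∀ x y : ι → ℝ, IsImputation A α x → IsImputation B β y →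
      IsImputation (A.erase i ∪ B) (gameComp A B i α β) (ptensor B i x y)) ∧
    (0 < α {i} → 0 < β B →
      ∀ x y x' y' : ι → ℝ,
        IsImputation A α x → IsImputation B β y →
        IsImputation A α x' → IsImputation B β y' →
        (∀ j ∈ A.erase i ∪ B, ptensor B i x y j = ptensor B i x' y' j) →
        (∀ j ∈ A, x j = x' j) ∧ (∀ j ∈ B, y j = y' j)) := by
  obtain ⟨tensor_mem, tensor_inj⟩ := imputation_ptensor_general A B α β hAB hα0 hβ0 i hi
  exact ⟨tensor_mem (hαnn _ (singleton_subset_iff.mpr hi)) (hβnn B Subset.rfl)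
    fun j hj => hβnn _ (singleton_subset_iff.mpr hj), fun hαi hβB => tensor_inj hαi hβB.ne'⟩
end

section
/- Let Γ_A = (A, α) and Γ_B = (B, β) be normalized cooperative games on disjoint finite player sets, let i ∈ A, and let Γ_C = Γ_A ∘_i Γ_B. Then the Shapley value of the composite game is given as follows: for j ∈ B, φ_j(Γ_C) = Σ_{S ⊆ A, i ∈ S} Σ_{T ⊆ B, j ∈ T} μ^α(S)·μ^β(T) / |S ⋄_i T|; and for j ∈ A ∖ {i}, φ_j(Γ_C) = Σ_{S ⊆ A ∖ {i}, j ∈ S} μ^α(S)/|S| + Σ_{S ⊆ A, {i, j} ⊆ S} Σ_{T ⊆ B} μ^α(S)·μ^β(T) / |S ⋄_i T|, where S ⋄_i T = (S ∖ {i}) ∪ T (here the first sum in the second case is the Shapley value of the restriction of Γ_A to A ∖ {i}). -/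
open Finset

/-- The Möbius transform of a coalition function. -/
noncomputable def mobius {ι : Type*} [DecidableEq ι]
    (v : Finset ι → ℝ) (S : Finset ι) : ℝ :=
  ∑ T ∈ S.powerset, (-1 : ℝ) ^ (S.card - T.card) * v T

/-- The Shapley value of player `j` in the game `(N, v)`:
`φ_j(Γ) = Σ_{S ⊆ N, j ∈ S} μ^v(S)/|S|`. -/
noncomputable def shapley {ι : Type*} [DecidableEq ι]
    (N : Finset ι) (v : Finset ι → ℝ) (j : ι) : ℝ :=
  ∑ S ∈ N.powerset.filter (fun S => j ∈ S), mobius v S / (S.card : ℝ)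

/-!
For a product game `S ↦ f (S ∩ A) * g (S ∩ B)` on disjoint player sets the Möbius transform is
multiplicative, and the Möbius transform of `∂ᵢ α` at a coalition `P` avoiding `i` is that of `α`
at `P ∪ {i}`. The composite game is a sum of two product games, `α · (const (β B))` and `∂ᵢ α · β`.
Since a constant game has Möbius transform supported on `∅`, for `P ⊆ A ∖ {i}` and `T ⊆ B`
`μ (P ∪ T) = μ^α P * (if T = ∅ then β B else 0) + μ^α (P ∪ {i}) * μ^β T`,
and summing this over the coalitions containing `j` gives both formulas.
-/

section PowersetSums

variable {ι M : Type*} [DecidableEq ι] [AddCommMonoid M] {X Y : Finset ι}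

lemma sum_powerset_union (hXY : Disjoint X Y) (f : Finset ι → M) :
    ∑ S ∈ (X ∪ Y).powerset, f S = ∑ P ∈ X.powerset, ∑ T ∈ Y.powerset, f (P ∪ T) := by
  induction Y using Finset.induction_on generalizing f with
  | empty => simp
  | insert y Y hyY ih =>
    obtain ⟨hyX, hXY⟩ := disjoint_insert_right.1 hXY
    have hy : y ∉ X ∪ Y := by simp [hyX, hyY]
    rw [union_insert, sum_powerset_insert hy, ih hXY, ih hXY, ← sum_add_distrib]
    simp only [sum_powerset_insert hyY, union_insert]

lemma sum_filter_mem_powerset_union_right {j : ι} (hXY : Disjoint X Y) (hj : j ∈ Y)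
    (f : Finset ι → M) :
    ∑ S ∈ (X ∪ Y).powerset with j ∈ S, f S =
      ∑ P ∈ X.powerset, ∑ T ∈ Y.powerset with j ∈ T, f (P ∪ T) := by
  rw [sum_filter, sum_powerset_union hXY]
  refine sum_congr rfl fun P hP => ?_
  have hjP : j ∉ P := fun h => disjoint_left.1 hXY (mem_powerset.1 hP h) hj
  simp only [sum_filter, mem_union, hjP, false_or]

lemma sum_filter_mem_powerset_union_left {j : ι} (hXY : Disjoint X Y) (hj : j ∈ X)
    (f : Finset ι → M) :
    ∑ S ∈ (X ∪ Y).powerset with j ∈ S, f S =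
      ∑ P ∈ X.powerset with j ∈ P, ∑ T ∈ Y.powerset, f (P ∪ T) := by
  rw [union_comm, sum_filter_mem_powerset_union_right hXY.symm hj, sum_comm]
  simp only [union_comm]

lemma sum_filter_mem_powerset {i : ι} (hi : i ∈ X) (f : Finset ι → M) :
    ∑ S ∈ X.powerset with i ∈ S, f S = ∑ P ∈ (X.erase i).powerset, f (insert i P) := by
  have hX : X.erase i ∪ {i} = X := by rw [union_comm, ← insert_eq, insert_erase hi]
  have hdisj : Disjoint (X.erase i) {i} := disjoint_singleton_right.2 (notMem_erase i X)
  have hsingleton : ({i} : Finset ι).powerset.filter (i ∈ ·) = {{i}} := by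
    ext T
    grind
  conv_lhs => rw [← hX]
  rw [sum_filter_mem_powerset_union_right hdisj (mem_singleton_self i), hsingleton]
  simp only [sum_singleton, union_singleton]

lemma sum_filter_mem_and_mem_powerset {i j : ι} (hi : i ∈ X) (hji : j ≠ i) (f : Finset ι → M) :
    ∑ S ∈ X.powerset with i ∈ S ∧ j ∈ S, f S =
      ∑ P ∈ (X.erase i).powerset with j ∈ P, f (insert i P) := by
  rw [← filter_filter, sum_filter, sum_filter_mem_powerset hi, sum_filter]
  simp only [mem_insert, hji, false_or]

end PowersetSums

section Mobius

variable {ι : Type*} [DecidableEq ι] {A B P T : Finset ι} {i : ι}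

lemma mobius_add (v w : Finset ι → ℝ) (S : Finset ι) :
    mobius (fun U => v U + w U) S = mobius v S + mobius w S := by
  simp only [mobius, mul_add, sum_add_distrib]

lemma mobius_insert (v : Finset ι → ℝ) (hi : i ∉ P) :
    mobius v (insert i P) = mobius (gameDeriv v i) P := by
  simp only [mobius, gameDeriv]
  rw [sum_powerset_insert hi, ← sum_add_distrib]
  refine sum_congr rfl fun Q hQ => ?_
  have hQP : Q ⊆ P := mem_powerset.1 hQ
  have hiQ : i ∉ Q := fun h => hi (hQP h)
  rw [card_insert_of_notMem hi, card_insert_of_notMem hiQ, erase_eq_of_notMem hiQ,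
    Nat.add_sub_add_right, Nat.sub_add_comm (card_le_card hQP), pow_succ]
  ring

lemma mobius_const (c : ℝ) (T : Finset ι) :
    mobius (fun _ => c) T = if T = ∅ then c else 0 := by
  induction T using Finset.induction_on with
  | empty => simp [mobius]
  | insert t T ht _ =>
    rw [mobius_insert _ ht, if_neg (insert_ne_empty t T)]
    simp only [mobius, gameDeriv, sub_self, mul_zero, sum_const_zero]

lemma pow_card_union_sub_card_union {M : Type*} [Monoid M] (x : M) {Q U : Finset ι}
    (hPT : Disjoint P T) (hQ : Q ⊆ P) (hU : U ⊆ T) :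
    x ^ (#(P ∪ T) - #(Q ∪ U)) = x ^ (#P - #Q) * x ^ (#T - #U) := by
  have hQU : Disjoint Q U := hPT.mono hQ hU
  rw [card_union_of_disjoint hPT, card_union_of_disjoint hQU, ← pow_add,
    tsub_add_tsub_comm (card_le_card hQ) (card_le_card hU)]

lemma mobius_mul_inter_union (hAB : Disjoint A B) (hP : P ⊆ A) (hT : T ⊆ B) (f g : Finset ι → ℝ) :
    mobius (fun S => f (S ∩ A) * g (S ∩ B)) (P ∪ T) = mobius f P * mobius g T := by
  have hPT : Disjoint P T := hAB.mono hP hT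
  simp only [mobius]
  rw [sum_powerset_union hPT, sum_mul_sum]
  refine sum_congr rfl fun Q hQ => sum_congr rfl fun U hU => ?_
  rw [mem_powerset] at hQ hU
  have hQA : (Q ∪ U) ∩ A = Q := by
    rw [union_inter_distrib_right, inter_eq_left.2 (hQ.trans hP),
      disjoint_iff_inter_eq_empty.1 (hAB.symm.mono_left (hU.trans hT)), union_empty]
  have hUB : (Q ∪ U) ∩ B = U := by
    rw [union_inter_distrib_right, inter_eq_left.2 (hU.trans hT),
      disjoint_iff_inter_eq_empty.1 (hAB.mono_left (hQ.trans hP)), empty_union]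
  rw [hQA, hUB, pow_card_union_sub_card_union (-1) hPT hQ hU]
  ring

lemma mobius_gameComp_union (α β : Finset ι → ℝ) (hAB : Disjoint A B)
    (hP : P ⊆ A.erase i) (hT : T ⊆ B) :
    mobius (gameComp A B i α β) (P ∪ T) =
      mobius α P * (if T = ∅ then β B else 0) + mobius α (insert i P) * mobius β T := by
  have hiP : i ∉ P := fun h => notMem_erase i A (hP h)
  have hPA : P ⊆ A := hP.trans (erase_subset i A)
  calc mobius (gameComp A B i α β) (P ∪ T)
      = mobius (fun S => α (S ∩ A) * β B) (P ∪ T) +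
          mobius (fun S => gameDeriv α i (S ∩ A) * β (S ∩ B)) (P ∪ T) := by
        rw [← mobius_add]
        congr with S
        rw [gameComp, mul_comm (β B)]
    _ = mobius α P * mobius (fun _ => β B) T + mobius (gameDeriv α i) P * mobius β T := by
        rw [mobius_mul_inter_union hAB hPA hT α fun _ => β B, mobius_mul_inter_union hAB hPA hT]
    _ = _ := by rw [mobius_const, mobius_insert α hiP]

end Mobius

section Shapley

variable {ι : Type*} [DecidableEq ι] {A B : Finset ι} {i j : ι}

lemma shapley_gameComp_of_mem_right (α β : Finset ι → ℝ) (hAB : Disjoint A B) (hi : i ∈ A)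
    (hj : j ∈ B) :
    shapley (A.erase i ∪ B) (gameComp A B i α β) j =
      ∑ S ∈ A.powerset with i ∈ S, ∑ T ∈ B.powerset with j ∈ T,
        mobius α S * mobius β T / (#(S.erase i ∪ T) : ℝ) := by
  have hdisj : Disjoint (A.erase i) B := hAB.mono_left (erase_subset i A)
  rw [shapley, sum_filter_mem_powerset_union_right hdisj hj, sum_filter_mem_powerset hi]
  refine sum_congr rfl fun P hP => sum_congr rfl fun T hT => ?_
  obtain ⟨hTB, hjT⟩ := mem_filter.1 hT
  rw [mem_powerset] at hP hTB
  have hiP : i ∉ P := fun h => notMem_erase i A (hP h)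
  rw [mobius_gameComp_union α β hAB hP hTB, if_neg (ne_empty_of_mem hjT), mul_zero, zero_add,
    erase_insert hiP]

lemma shapley_gameComp_of_mem_left (α β : Finset ι → ℝ) (hAB : Disjoint A B) (hi : i ∈ A)
    (hj : j ∈ A.erase i) :
    shapley (A.erase i ∪ B) (gameComp A B i α β) j =
      β B * shapley (A.erase i) α j +
        ∑ S ∈ A.powerset with i ∈ S ∧ j ∈ S, ∑ T ∈ B.powerset,
          mobius α S * mobius β T / (#(S.erase i ∪ T) : ℝ) := by
  have hdisj : Disjoint (A.erase i) B := hAB.mono_left (erase_subset i A)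
  rw [shapley, sum_filter_mem_powerset_union_left hdisj hj,
    sum_filter_mem_and_mem_powerset hi (ne_of_mem_erase hj), shapley, mul_sum, ← sum_add_distrib]
  refine sum_congr rfl fun P hP => ?_
  have hPA : P ⊆ A.erase i := mem_powerset.1 (mem_filter.1 hP).1
  have hiP : i ∉ P := fun h => notMem_erase i A (hPA h)
  have hempty : ∑ T ∈ B.powerset, mobius α P * (if T = ∅ then β B else 0) / (#(P ∪ T) : ℝ) =
      β B * (mobius α P / #P) := by
    rw [sum_eq_single_of_mem ∅ (empty_mem_powerset B) fun T _ hT => by simp [hT], if_pos rfl,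
      union_empty]
    ring
  rw [← hempty, ← sum_add_distrib, erase_insert hiP]
  refine sum_congr rfl fun T hT => ?_
  rw [mobius_gameComp_union α β hAB hPA (mem_powerset.1 hT), add_div]

theorem shapley_gameComp_general (α β : Finset ι → ℝ) (hAB : Disjoint A B) (hi : i ∈ A) :
    (∀ j ∈ B,
      shapley (A.erase i ∪ B) (gameComp A B i α β) j =
        ∑ S ∈ A.powerset with i ∈ S, ∑ T ∈ B.powerset with j ∈ T,
          mobius α S * mobius β T / (#(S.erase i ∪ T) : ℝ)) ∧
    (∀ j ∈ A.erase i,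
      shapley (A.erase i ∪ B) (gameComp A B i α β) j =
        β B * shapley (A.erase i) α j +
          ∑ S ∈ A.powerset with i ∈ S ∧ j ∈ S, ∑ T ∈ B.powerset,
            mobius α S * mobius β T / (#(S.erase i ∪ T) : ℝ)) :=
  ⟨fun _ => shapley_gameComp_of_mem_right α β hAB hi,
    fun _ => shapley_gameComp_of_mem_left α β hAB hi⟩

end Shapley

/-- The Shapley value of a composite game of two normalized games: for `j ∈ B`,
`φ_j(Γ_C) = Σ_{S ∋ i} Σ_{T ∋ j} μ^α(S)μ^β(T)/|S ⋄ᵢ T|`, and for `j ∈ A ∖ {i}`,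
`φ_j(Γ_C) = φ_j(Γ_{A ∖ {i}}) + Σ_{S ⊇ {i,j}} Σ_{T ⊆ B} μ^α(S)μ^β(T)/|S ⋄ᵢ T|`,
where `S ⋄ᵢ T = (S ∖ {i}) ∪ T`. -/
theorem shapley_gameComp {ι : Type*} [DecidableEq ι]
    (A B : Finset ι) (α β : Finset ι → ℝ)
    (hAB : Disjoint A B) (hα0 : α ∅ = 0) (hβ0 : β ∅ = 0)
    (hαn : α A = 1) (hβn : β B = 1) (i : ι) (hi : i ∈ A) :
    (∀ j ∈ B,
      shapley (A.erase i ∪ B) (gameComp A B i α β) j =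
        ∑ S ∈ A.powerset.filter (fun S => i ∈ S),
          ∑ T ∈ B.powerset.filter (fun T => j ∈ T),
            mobius α S * mobius β T / ((S.erase i ∪ T).card : ℝ)) ∧
    (∀ j ∈ A.erase i,
      shapley (A.erase i ∪ B) (gameComp A B i α β) j =
        (∑ S ∈ (A.erase i).powerset.filter (fun S => j ∈ S),
          mobius α S / (S.card : ℝ)) +
        ∑ S ∈ A.powerset.filter (fun S => i ∈ S ∧ j ∈ S),
          ∑ T ∈ B.powerset,
            mobius α S * mobius β T / ((S.erase i ∪ T).card : ℝ)) := by
  simpa only [hβn, one_mul, shapley] using shapley_gameComp_general α β hAB hi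
end
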